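/- arXiv:2403.04681 — 7 statements merged into one kernel-verified Lean document; each statement's English description precedes it below -/
import Mathlib

section
/- Let n ≥ 3. Define the trilinear form P₀ on su(n) by P₀(X,Y,Z) = Re((i/2)·tr(XYZ + ZYX)) (this value is real for skew-Hermitian X,Y,Z). Then the ℝ-vector space of symmetric ℝ-trilinear forms P : su(n) × su(n) × su(n) → ℝ that are invariant under conjugation, i.e. P(UXU⁻¹, UYU⁻¹, UZU⁻¹) = P(X,Y,Z) for every U in the special unitary group SU(n), is one-dimensional and spanned by P₀. In particular P₀ is itself such an invariant form, P₀ ≠ 0, and every invariant symmetric trilinear form equals c·P₀ for a unique c ∈ ℝ. -/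
/-!
An invariant form `P` is determined by its cubic form `X ↦ P X X X` (polarization), hence, by the
spectral theorem, by its restriction to diagonal matrices. Conjugation by a unitary `U` agrees with
conjugation by `z • U` for `z` a suitable root of `(det U)⁻¹`, so invariance under `SU(n)` is
invariance under `U(n)`, and in particular under permutation matrices.

Pull `P` back along `a ↦ i·diag(a - mean a)` to an `Sₙ`-invariant symmetric trilinear form `T` on
`ℝⁿ` with `T(1, ·, ·) = 0`. Its values `A = T(eᵢ,eᵢ,eᵢ)`, `B = T(eᵢ,eᵢ,eⱼ)`, `C = T(eᵢ,eⱼ,eₖ)` do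
not depend on the choice of distinct indices, and `A + (n-1)B = 0`, `2B + (n-2)C = 0`. So `A = 0`
forces `T = 0`, and then `P = 0` (`eq_zero_of_diag`). The linear functional `P ↦ A` is therefore
injective on invariant forms, so a space containing the nonzero form `P₀` is spanned by it.
-/

open Matrix

/-- The real Lie algebra `su(n)` of traceless skew-Hermitian matrices, as a real subspace
of the space of `n × n` complex matrices. -/
noncomputable def su (n : ℕ) : Submodule ℝ (Matrix (Fin n) (Fin n) ℂ) where
  carrier := {X | Xᴴ = -X ∧ X.trace = 0}
  add_mem' := by
    rintro X Y ⟨hX1, hX2⟩ ⟨hY1, hY2⟩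
    exact ⟨by rw [conjTranspose_add, hX1, hY1, neg_add], by rw [trace_add, hX2, hY2, add_zero]⟩
  zero_mem' := ⟨by simp, by simp⟩
  smul_mem' := by
    rintro c X ⟨hX1, hX2⟩
    refine ⟨?_, ?_⟩
    · rw [conjTranspose_smul, hX1]
      simp
    · rw [trace_smul, hX2, smul_zero]

/-- The cubic form `P₀(X,Y,Z) = Re((i/2)·tr(XYZ + ZYX))` on `su(n)`. -/
noncomputable def P0 (n : ℕ) (X Y Z : su n) : ℝ :=
  (Complex.I / 2 *
    ((X : Matrix (Fin n) (Fin n) ℂ) * (Y : Matrix (Fin n) (Fin n) ℂ) *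
        (Z : Matrix (Fin n) (Fin n) ℂ) +
      (Z : Matrix (Fin n) (Fin n) ℂ) * (Y : Matrix (Fin n) (Fin n) ℂ) *
        (X : Matrix (Fin n) (Fin n) ℂ)).trace).re

/-- A function `P : su(n)³ → ℝ` is a symmetric trilinear form invariant under
conjugation by the special unitary group. -/
def IsInvSymTrilinear (n : ℕ) (P : su n → su n → su n → ℝ) : Prop :=
  (∀ X X' Y Z, P (X + X') Y Z = P X Y Z + P X' Y Z) ∧
  (∀ (c : ℝ) X Y Z, P (c • X) Y Z = c * P X Y Z) ∧
  (∀ X Y Z, P X Y Z = P Y X Z) ∧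
  (∀ X Y Z, P X Y Z = P X Z Y) ∧
  (∀ U : Matrix (Fin n) (Fin n) ℂ, U ∈ Matrix.specialUnitaryGroup (Fin n) ℂ →
    ∀ X Y Z X' Y' Z' : su n,
      (X' : Matrix (Fin n) (Fin n) ℂ) = U * (X : Matrix (Fin n) (Fin n) ℂ) * Uᴴ →
      (Y' : Matrix (Fin n) (Fin n) ℂ) = U * (Y : Matrix (Fin n) (Fin n) ℂ) * Uᴴ →
      (Z' : Matrix (Fin n) (Fin n) ℂ) = U * (Z : Matrix (Fin n) (Fin n) ℂ) * Uᴴ →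
      P X' Y' Z' = P X Y Z)

/-! ### Polarization and unitary invariance -/

namespace IsInvSymTrilinear

variable {n : ℕ} {P : su n → su n → su n → ℝ}

lemma add₂ (h : IsInvSymTrilinear n P) (X Y Y' Z : su n) :
    P X (Y + Y') Z = P X Y Z + P X Y' Z := by
  obtain ⟨ha, -, hs, -, -⟩ := h
  rw [hs, ha, hs Y, hs Y']

lemma add₃ (h : IsInvSymTrilinear n P) (X Y Z Z' : su n) :
    P X Y (Z + Z') = P X Y Z + P X Y Z' := by
  have h2 := h.add₂
  obtain ⟨-, -, -, ht, -⟩ := h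
  rw [ht, h2, ht X Z, ht X Z']

/-- Polarization. -/
lemma eq_zero_of_cube (h : IsInvSymTrilinear n P) (h0 : ∀ X, P X X X = 0) (X Y Z : su n) :
    P X Y Z = 0 := by
  have h2 := h.add₂
  have h3 := h.add₃
  obtain ⟨h1, -, hs, ht, -⟩ := h
  have e1 := h0 (X + Y + Z)
  have e2 := h0 (X + Y)
  have e3 := h0 (X + Z)
  have e4 := h0 (Y + Z)
  simp only [h1, h2, h3, h0] at e1 e2 e3 e4
  linarith [hs X Y Z, hs X Z Y, hs Y Z X, ht X Y Z, ht Y X Z, ht Z X Y]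

/-- Invariance under the full unitary group. -/
lemma unitary (h : IsInvSymTrilinear n P) (hn : n ≠ 0) {U : Matrix (Fin n) (Fin n) ℂ}
    (hU : U ∈ Matrix.unitaryGroup (Fin n) ℂ) {X Y Z X' Y' Z' : su n}
    (hX : (X' : Matrix (Fin n) (Fin n) ℂ) = U * X * Uᴴ)
    (hY : (Y' : Matrix (Fin n) (Fin n) ℂ) = U * Y * Uᴴ)
    (hZ : (Z' : Matrix (Fin n) (Fin n) ℂ) = U * Z * Uᴴ) : P X' Y' Z' = P X Y Z := by
  obtain ⟨z, hz⟩ := IsAlgClosed.exists_pow_nat_eq (star U.det) (Nat.pos_of_ne_zero hn)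
  have hd : star U.det * U.det = 1 := by
    exact (Unitary.mem_iff.1 (Matrix.det_of_mem_unitary hU)).1
  have hn1 : ‖U.det‖ = 1 := by
    have h1 := congrArg norm hd
    rw [norm_mul, norm_star, norm_one] at h1
    nlinarith [norm_nonneg U.det]
  have hz1 : ‖z‖ = 1 := by
    have h1 := congrArg norm hz
    rw [norm_pow, norm_star, hn1] at h1
    exact (pow_eq_one_iff_of_nonneg (norm_nonneg z) hn).1 h1
  have hzz : z * star z = 1 := by
    have := Complex.mul_conj' z
    simpa [hz1] using this
  have key : ∀ M : Matrix (Fin n) (Fin n) ℂ, (z • U) * M * (z • U)ᴴ = U * M * Uᴴ := by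
    intro M
    rw [conjTranspose_smul, Matrix.smul_mul, Matrix.smul_mul, Matrix.mul_smul, smul_smul, hzz, one_smul]
  refine h.2.2.2.2 (z • U) ?_ X Y Z X' Y' Z' (by rw [key, hX]) (by rw [key, hY]) (by rw [key, hZ])
  rw [Matrix.mem_specialUnitaryGroup_iff]
  refine ⟨?_, ?_⟩
  · rw [Matrix.mem_unitaryGroup_iff] at hU ⊢
    have := key 1
    simp only [mul_one] at this
    rw [star_eq_conjTranspose] at hU ⊢
    rw [this, hU]
  · rw [det_smul, Fintype.card_fin, hz, hd]

end IsInvSymTrilinear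

/-! ### Diagonal matrices in `su(n)` -/

/-- The linear map `a ↦ i·diag(a - mean a)` from `ℝⁿ` onto the diagonal matrices in `su(n)`. -/
noncomputable def diagSu (n : ℕ) : (Fin n → ℝ) →ₗ[ℝ] su n where
  toFun a := ⟨diagonal fun k => Complex.I * ((a k - (∑ j, a j) / n : ℝ) : ℂ), by
    refine ⟨?_, ?_⟩
    · rw [diagonal_conjTranspose, diagonal_neg]
      congr 1
      ext k
      simp
    · rw [trace_diagonal, ← Finset.mul_sum, ← Complex.ofReal_sum]
      rcases Nat.eq_zero_or_pos n with rfl | hn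
      · simp
      · have : (n : ℝ) ≠ 0 := by positivity
        simp [Finset.sum_sub_distrib]
        have : (n : ℂ) ≠ 0 := by exact_mod_cast this
        rw [mul_div_cancel₀ _ this, sub_self]⟩
  map_add' a b := by
    apply Subtype.ext
    simp only [Submodule.coe_add, diagonal_add, Pi.add_apply, Finset.sum_add_distrib]
    congr 1
    ext k
    push_cast
    ring
  map_smul' c a := by
    apply Subtype.ext
    simp only [Submodule.coe_smul, ← diagonal_smul, Pi.smul_apply, smul_eq_mul, ← Finset.mul_sum,
      RingHom.id_apply]
    congr 1
    ext k
    simp only [Pi.smul_apply, Complex.real_smul]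
    push_cast
    ring

lemma coe_diagSu (n : ℕ) (a : Fin n → ℝ) : (diagSu n a : Matrix (Fin n) (Fin n) ℂ) =
    diagonal fun k => Complex.I * ((a k - (∑ j, a j) / n : ℝ) : ℂ) := rfl

lemma diagSu_one (n : ℕ) : diagSu n 1 = 0 := by
  apply Subtype.ext
  rw [coe_diagSu]
  rcases Nat.eq_zero_or_pos n with rfl | hn
  · exact Subsingleton.elim _ _
  · have : (n : ℂ) ≠ 0 := by exact_mod_cast hn.ne'
    ext i j
    simp [diagonal_apply, this]

/-- Spectral theorem for `su(n)`. -/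
lemma exists_diag (n : ℕ) (X : su n) : ∃ U ∈ Matrix.unitaryGroup (Fin n) ℂ, ∃ a : Fin n → ℝ,
    (X : Matrix (Fin n) (Fin n) ℂ) = U * (diagSu n a : Matrix (Fin n) (Fin n) ℂ) * Uᴴ := by
  obtain ⟨X, hX, hX0⟩ := X
  have hH : ((-Complex.I) • X).IsHermitian := by
    rw [Matrix.IsHermitian, conjTranspose_smul, hX]
    simp
  have hs := hH.spectral_theorem
  have ht : ∑ j, hH.eigenvalues j = 0 := by
    have h1 := hH.trace_eq_sum_eigenvalues
    rw [trace_smul, hX0, smul_zero] at h1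
    have : ((∑ j, hH.eigenvalues j : ℝ) : ℂ) = 0 := by
      rw [h1]; push_cast; rfl
    exact_mod_cast this
  refine ⟨hH.eigenvectorUnitary, hH.eigenvectorUnitary.2, hH.eigenvalues, ?_⟩
  have h2 : X = Complex.I • ((-Complex.I) • X) := by
    rw [smul_smul]; simp
  rw [coe_diagSu, ht]
  have h3 : (diagonal fun k => Complex.I * ((hH.eigenvalues k - 0 / n : ℝ) : ℂ)) =
      Complex.I • diagonal (RCLike.ofReal ∘ hH.eigenvalues : Fin n → ℂ) := by
    rw [← diagonal_smul]
    congr 1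
    ext k
    simp
  rw [h3, Matrix.mul_smul, Matrix.smul_mul]
  change X = _
  conv_lhs => rw [h2, hs]
  rw [Unitary.conjStarAlgAut_apply]
  rfl

/-- A vanishing sum whose terms are each `0` or a common value `f l` forces `f l = 0`. -/
lemma eq_zero_of_sum_eq_zero {n : ℕ} (f : Fin n → ℝ) (l : Fin n) (hs : ∑ k, f k = 0)
    (h : ∀ k, f k = 0 ∨ f k = f l) : f l = 0 := by
  have h1 : ∑ k, f k * f l = 0 := by rw [← Finset.sum_mul, hs, zero_mul]
  rw [Finset.sum_eq_zero_iff_of_nonneg] at h1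
  · simpa using h1 l (Finset.mem_univ l)
  · intro k _
    rcases h k with h | h <;> rw [h]
    · simp
    · exact mul_self_nonneg _

/-! ### Restriction to diagonal matrices -/

namespace IsInvSymTrilinear

variable {n : ℕ} {P : su n → su n → su n → ℝ}

/-- On diagonal matrices, `P` is invariant under permuting the entries. -/
lemma perm (h : IsInvSymTrilinear n P) (hn : n ≠ 0) (σ : Equiv.Perm (Fin n))
    (a b c : Fin n → ℝ) : P (diagSu n (a ∘ σ)) (diagSu n (b ∘ σ)) (diagSu n (c ∘ σ)) =
      P (diagSu n a) (diagSu n b) (diagSu n c) := by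
  have key : ∀ a : Fin n → ℝ, (diagSu n (a ∘ σ) : Matrix (Fin n) (Fin n) ℂ) =
      σ.permMatrix ℂ * (diagSu n a : Matrix (Fin n) (Fin n) ℂ) * (σ.permMatrix ℂ)ᴴ := by
    intro a
    rw [conjTranspose_permMatrix, Equiv.Perm.permMatrix, Equiv.Perm.permMatrix,
      PEquiv.toMatrix_toPEquiv_mul, PEquiv.mul_toMatrix_toPEquiv, coe_diagSu, coe_diagSu]
    ext i j
    have hj : σ i = (Equiv.symm σ⁻¹) j ↔ i = j := σ.injective.eq_iff
    simp [diagonal_apply, Equiv.sum_comp σ a, hj]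
  refine h.unitary hn (U := σ.permMatrix ℂ) ?_ (key a) (key b) (key c)
  rw [Matrix.mem_unitaryGroup_iff, star_eq_conjTranspose, conjTranspose_permMatrix,
    ← Matrix.permMatrix_mul]
  simp

lemma single_perm (h : IsInvSymTrilinear n P) (hn : n ≠ 0) (σ : Equiv.Perm (Fin n))
    (i j k : Fin n) :
    P (diagSu n (Pi.single (σ i) 1)) (diagSu n (Pi.single (σ j) 1))
        (diagSu n (Pi.single (σ k) 1)) =
      P (diagSu n (Pi.single i 1)) (diagSu n (Pi.single j 1)) (diagSu n (Pi.single k 1)) := by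
  have key : ∀ i : Fin n, (Pi.single (σ i) 1 : Fin n → ℝ) ∘ σ = Pi.single i 1 := by
    intro i
    ext k
    simp [Pi.single_apply]
  rw [← h.perm hn σ, key, key, key]

/-- The functional `a ↦ P(diag a, Y, Z)` is determined by its values on basis vectors. -/
lemma expand (h : IsInvSymTrilinear n P) (a : Fin n → ℝ) (Y Z : su n) :
    P (diagSu n a) Y Z = ∑ i, a i * P (diagSu n (Pi.single i 1)) Y Z := by
  let L : (Fin n → ℝ) →ₗ[ℝ] ℝ :=
    { toFun := fun a => P (diagSu n a) Y Z
      map_add' := fun a b => by rw [map_add, h.1]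
      map_smul' := fun c a => by rw [map_smul, h.2.1]; rfl }
  have := LinearMap.pi_apply_eq_sum_univ L a
  have hi : ∀ i : Fin n, (fun j => if i = j then (1 : ℝ) else 0) = Pi.single i 1 := by
    intro i
    ext j
    simp [Pi.single_apply, eq_comm]
  simp only [hi, smul_eq_mul] at this
  exact this

lemma sum_single (h : IsInvSymTrilinear n P) (Y Z : su n) :
    ∑ i, P (diagSu n (Pi.single i 1)) Y Z = 0 := by
  have h1 := h.expand 1 Y Z
  have h2 := h.2.1 0 0 Y Z
  rw [zero_smul, zero_mul] at h2
  rw [diagSu_one, h2] at h1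
  simpa using h1.symm

/-- An invariant form whose value `P(E,E,E)` vanishes at `E = i·diag(eₘ - 1/n)` is zero. -/
lemma eq_zero_of_diag (h : IsInvSymTrilinear n P) (m : Fin n)
    (h0 : P (diagSu n (Pi.single m 1)) (diagSu n (Pi.single m 1)) (diagSu n (Pi.single m 1)) = 0)
    (X Y Z : su n) : P X Y Z = 0 := by
  have hn : n ≠ 0 := by rintro rfl; exact m.elim0
  have hs := h.2.2.1
  have ht := h.2.2.2.1
  set E : Fin n → su n := fun i => diagSu n (Pi.single i 1) with hE
  have hp : ∀ (σ : Equiv.Perm (Fin n)) (i j k : Fin n),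
      P (E (σ i)) (E (σ j)) (E (σ k)) = P (E i) (E j) (E k) := h.single_perm hn
  have hA : ∀ i, P (E i) (E i) (E i) = 0 := by
    intro i
    have := hp (Equiv.swap m i) m m m
    rw [Equiv.swap_apply_left] at this
    rw [this]
    exact h0
  have hB : ∀ i j, P (E j) (E i) (E i) = 0 := by
    intro i j
    by_cases hij : j = i
    · rw [hij, hA]
    refine eq_zero_of_sum_eq_zero (fun k => P (E k) (E i) (E i)) j (h.sum_single _ _) fun k => ?_
    by_cases hk : k = i
    · left; rw [hk, hA]
    · right
      have := hp (Equiv.swap j k) j i i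
      rwa [Equiv.swap_apply_left, Equiv.swap_apply_of_ne_of_ne (Ne.symm hij) (Ne.symm hk)] at this
  have hC : ∀ i j l, P (E l) (E i) (E j) = 0 := by
    intro i j l
    have hi : P (E i) (E i) (E j) = 0 := by rw [ht, hs, hB]
    have hj : P (E j) (E i) (E j) = 0 := by rw [hs, hB]
    by_cases hli : l = i
    · rw [hli, hi]
    by_cases hlj : l = j
    · rw [hlj, hj]
    refine eq_zero_of_sum_eq_zero (fun k => P (E k) (E i) (E j)) l (h.sum_single _ _) fun k => ?_
    by_cases hk : k = i
    · left; rw [hk, hi]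
    by_cases hk' : k = j
    · left; rw [hk', hj]
    · right
      have := hp (Equiv.swap l k) l i j
      rwa [Equiv.swap_apply_left, Equiv.swap_apply_of_ne_of_ne (Ne.symm hli) (Ne.symm hk),
        Equiv.swap_apply_of_ne_of_ne (Ne.symm hlj) (Ne.symm hk')] at this
  have hD : ∀ a : Fin n → ℝ, P (diagSu n a) (diagSu n a) (diagSu n a) = 0 := by
    intro a
    rw [h.expand]
    refine Finset.sum_eq_zero fun i _ => ?_
    rw [hs, h.expand, Finset.sum_eq_zero, mul_zero]
    intro j _
    rw [ht, hs, h.expand, Finset.sum_eq_zero, mul_zero]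
    intro k _
    have : P (E k) (E j) (E i) = 0 := hC _ _ _
    rw [this, mul_zero]
  refine h.eq_zero_of_cube (fun X => ?_) X Y Z
  obtain ⟨U, hU, a, ha⟩ := exists_diag n X
  rw [h.unitary hn hU ha ha ha, hD]

lemma sub_smul {Q : su n → su n → su n → ℝ} (hP : IsInvSymTrilinear n P)
    (hQ : IsInvSymTrilinear n Q) (c : ℝ) :
    IsInvSymTrilinear n fun X Y Z => P X Y Z - c * Q X Y Z := by
  obtain ⟨p1, p2, p3, p4, p5⟩ := hP
  obtain ⟨q1, q2, q3, q4, q5⟩ := hQ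
  refine ⟨?_, ?_, ?_, ?_, ?_⟩
  · intro X X' Y Z
    simp only [p1, q1]; ring
  · intro d X Y Z
    simp only [p2, q2]; ring
  · intro X Y Z
    simp only [p3 X, q3 X]
  · intro X Y Z
    simp only [p4 X Y, q4 X Y]
  · intro U hU X Y Z X' Y' Z' hX hY hZ
    simp only [p5 U hU X Y Z X' Y' Z' hX hY hZ, q5 U hU X Y Z X' Y' Z' hX hY hZ]

end IsInvSymTrilinear

/-! ### The form `P₀` -/

lemma isInvSymTrilinear_P0 (n : ℕ) : IsInvSymTrilinear n (P0 n) := by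
  have cyc : ∀ A B C : Matrix (Fin n) (Fin n) ℂ, (A * B * C).trace = (C * A * B).trace :=
    fun A B C => trace_mul_cycle A B C
  refine ⟨?_, ?_, ?_, ?_, ?_⟩
  · intro X X' Y Z
    simp only [P0, Submodule.coe_add, add_mul, mul_add, trace_add, Complex.add_re]
    ring
  · intro c X Y Z
    simp only [P0, Submodule.coe_smul, Matrix.smul_mul, trace_add, trace_smul, ← smul_add,
      mul_smul_comm, Complex.smul_re, smul_eq_mul]
  · intro X Y Z
    simp only [P0, trace_add]
    rw [cyc X Y Z, cyc Y X Z, add_comm]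
  · intro X Y Z
    simp only [P0, trace_add]
    rw [cyc Y Z X, cyc Z Y X, add_comm]
  · intro U hU X Y Z X' Y' Z' hX hY hZ
    have hU1 : Uᴴ * U = 1 :=
      Matrix.mem_unitaryGroup_iff'.1 (Matrix.mem_specialUnitaryGroup_iff.1 hU).1
    have key : ∀ A B C : Matrix (Fin n) (Fin n) ℂ,
        ((U * A * Uᴴ) * (U * B * Uᴴ) * (U * C * Uᴴ)).trace = (A * B * C).trace := by
      intro A B C
      have : (U * A * Uᴴ) * (U * B * Uᴴ) * (U * C * Uᴴ) =
          U * (A * (Uᴴ * U) * B * (Uᴴ * U) * C) * Uᴴ := by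
        simp only [mul_assoc]
      rw [this, hU1, trace_mul_cycle, hU1]
      simp
    simp only [P0, hX, hY, hZ, trace_add, key]

/-- With `d = eₘ - 1/n`, the value is `∑ dₖ³ = (n-1)(n-2)/n²`. -/
lemma P0_diag_ne_zero (n : ℕ) (hn : 3 ≤ n) (m : Fin n) :
    P0 n (diagSu n (Pi.single m 1)) (diagSu n (Pi.single m 1)) (diagSu n (Pi.single m 1)) ≠ 0 := by
  have h1 : P0 n (diagSu n (Pi.single m 1)) (diagSu n (Pi.single m 1))
      (diagSu n (Pi.single m 1)) = ∑ k, ((Pi.single m 1 : Fin n → ℝ) k - 1 / n) ^ 3 := by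
    simp only [P0, coe_diagSu, diagonal_mul_diagonal, diagonal_add, trace_diagonal,
      Finset.sum_pi_single', Finset.mem_univ, if_true]
    rw [Finset.mul_sum, Complex.re_sum]
    refine Finset.sum_congr rfl fun k _ => ?_
    have : ∀ t : ℂ, Complex.I / 2 * (Complex.I * t * (Complex.I * t) * (Complex.I * t) +
        Complex.I * t * (Complex.I * t) * (Complex.I * t)) = t ^ 3 := by
      intro t
      linear_combination (t ^ 3 * (Complex.I ^ 2 - 1)) * Complex.I_sq
    rw [this, ← Complex.ofReal_pow, Complex.ofReal_re]
  have h2 : ∀ k, ((Pi.single m 1 : Fin n → ℝ) k - 1 / n) ^ 3 =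
      (Pi.single m 1 : Fin n → ℝ) k * (1 - 3 / n + 3 / n ^ 2) - 1 / n ^ 3 := by
    intro k
    by_cases hk : k = m
    · subst hk; simp; ring
    · simp [hk]; ring
  have hn' : (3 : ℝ) ≤ n := by exact_mod_cast hn
  have hn0 : (n : ℝ) ≠ 0 := by positivity
  rw [h1, Finset.sum_congr rfl fun k _ => h2 k, Finset.sum_sub_distrib, ← Finset.sum_mul,
    Finset.sum_pi_single']
  have h3 : (1 : ℝ) * (1 - 3 / n + 3 / n ^ 2) - n * (1 / n ^ 3) = (n - 1) * (n - 2) / n ^ 2 := by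
    field_simp
    ring
  simp only [Finset.mem_univ, if_true, Finset.sum_const, Finset.card_univ, Fintype.card_fin,
    nsmul_eq_mul]
  rw [h3]
  have : 0 < ((n : ℝ) - 1) * (n - 2) := by nlinarith
  positivity

/-- **Proposition 6.1.** For `n ≥ 3`, the space of conjugation-invariant symmetric
trilinear forms on `su(n)` is one-dimensional, spanned by `P₀`: `P₀` is itself such a
form, it is nonzero, and every such form is a unique real scalar multiple of `P₀`. -/
theorem invariant_cubic_forms_one_dimensional (n : ℕ) (hn : 3 ≤ n) :
    IsInvSymTrilinear n (P0 n) ∧ P0 n ≠ 0 ∧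
      ∀ P : su n → su n → su n → ℝ, IsInvSymTrilinear n P →
        ∃! c : ℝ, P = fun X Y Z => c * P0 n X Y Z := by
  let m : Fin n := ⟨0, by omega⟩
  have hm := P0_diag_ne_zero n hn m
  refine ⟨isInvSymTrilinear_P0 n, fun h => hm (by rw [h]; rfl), fun P hP => ?_⟩
  set E : su n := diagSu n (Pi.single m 1) with hE
  refine ⟨P E E E / P0 n E E E, ?_, ?_⟩
  · funext X Y Z
    have h := (hP.sub_smul (isInvSymTrilinear_P0 n) (P E E E / P0 n E E E)).eq_zero_of_diag m
      (by rw [← hE, div_mul_cancel₀ _ hm, sub_self]) X Y Z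
    exact sub_eq_zero.1 h
  · intro c hc
    rw [eq_div_iff hm, hc]
end

section
/- Let n ≥ 2 and let X ∈ su(n), i.e. X is an n×n complex matrix with Xᴴ = -X and tr X = 0. Then the following are equivalent: (a) tr(X²Y) = 0 for every Y ∈ su(n); (b) X² = (tr(X²)/n)·Iₙ, where Iₙ is the identity matrix. -/
/-! The traceless part `Z = X² - (tr(X²)/n)·Iₙ` of `X²` is Hermitian, so `Y = iZ` lies in `su(n)`.
Since `Y` is traceless, `tr(X²Y) = tr(ZY) = i·tr(ZᴴZ)`, and the vanishing of `tr(ZᴴZ)` forces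
`Z = 0`. Conversely, a scalar matrix is trace-orthogonal to every traceless matrix. -/

open Matrix

/-- **Proposition 6.3 (i).** For `X ∈ su(n)` (i.e. `X` skew-Hermitian and traceless),
`tr(X²Y) = 0` for all `Y ∈ su(n)` if and only if `X² = (tr(X²)/n)·Iₙ`. -/
theorem mem_variety_iff (n : ℕ) (hn : 2 ≤ n) (X : Matrix (Fin n) (Fin n) ℂ)
    (hX : Xᴴ = -X) (hX0 : X.trace = 0) :
    (∀ Y : Matrix (Fin n) (Fin n) ℂ, Yᴴ = -Y → Y.trace = 0 → (X * X * Y).trace = 0) ↔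
      X * X = ((X * X).trace / (n : ℂ)) • (1 : Matrix (Fin n) (Fin n) ℂ) := by
  constructor
  · intro h
    have hn0 : (n : ℂ) ≠ 0 := by
      exact_mod_cast (by omega : n ≠ 0)
    have hH : (X * X)ᴴ = X * X := by
      rw [conjTranspose_mul, hX, neg_mul_neg]
    have hc : star ((X * X).trace / (n : ℂ)) = (X * X).trace / (n : ℂ) := by
      rw [star_div₀, ← trace_conjTranspose, hH, star_natCast]
    have hct : (X * X).trace / (n : ℂ) * n = (X * X).trace := div_mul_cancel₀ _ hn0
    generalize (X * X).trace / (n : ℂ) = c at hc hct ⊢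
    obtain ⟨Z, hZ⟩ : ∃ Z, Z = X * X - c • (1 : Matrix (Fin n) (Fin n) ℂ) := ⟨_, rfl⟩
    have hZH : Zᴴ = Z := by
      rw [hZ, conjTranspose_sub, hH, conjTranspose_smul, hc, conjTranspose_one]
    have hZt : Z.trace = 0 := by
      rw [hZ, trace_sub, trace_smul, trace_one, Fintype.card_fin, smul_eq_mul, hct, sub_self]
    have h1 := h (Complex.I • Z) (by
      rw [conjTranspose_smul, hZH, Complex.star_def, Complex.conj_I, neg_smul]) (by
      rw [trace_smul, hZt, smul_zero])
    have h2 : (X * X * Z).trace = 0 := by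
      rw [mul_smul_comm, trace_smul, smul_eq_mul] at h1
      exact (mul_eq_zero.mp h1).resolve_left Complex.I_ne_zero
    have h3 : (Zᴴ * Z).trace = 0 := by
      rw [hZH]
      nth_rewrite 1 [hZ]
      rw [sub_mul, trace_sub, h2, smul_mul_assoc, one_mul, trace_smul, hZt, smul_zero, sub_zero]
    have h4 : Z = 0 := by
      open scoped ComplexOrder in
      exact trace_conjTranspose_mul_self_eq_zero_iff.mp h3
    exact sub_eq_zero.mp (hZ.symm.trans h4)
  · intro h Y _ hY
    rw [h, smul_mul_assoc, one_mul, trace_smul, hY, smul_zero]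
end

section
/- Let n ≥ 2 be odd and let X ∈ su(n) satisfy X² = (tr(X²)/n)·Iₙ. Then X = 0. Equivalently, for n odd, the only X ∈ su(n) with tr(X²Y) = 0 for all Y ∈ su(n) is X = 0. -/
open Matrix

/-!
Write `X² = c • 1`. If `c = 0`, then `Xᴴ X = -X² = 0`, so `X = 0`. If `c ≠ 0`, choose `s` with
`s² = c`; then `P = (1 + s⁻¹ X) / 2` is idempotent with trace `n / 2`, because `tr X = 0`. The trace
of an idempotent is its rank, so `n / 2` is a natural number, which is impossible for `n` odd.
-/

/-- The natural number is the dimension of the subspace onto which `P` projects. -/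
lemma exists_nat_trace_of_idempotent {n : ℕ} (P : Matrix (Fin n) (Fin n) ℂ) (hP : P * P = P) :
    ∃ r : ℕ, P.trace = r := by
  have hid : IsIdempotentElem (Matrix.toLin' P) := by
    rw [IsIdempotentElem, Module.End.mul_eq_comp, ← Matrix.toLin'_mul, hP]
  obtain ⟨p, hp⟩ := LinearMap.isProj_iff_isIdempotentElem _ |>.mpr hid
  exact ⟨_, by rw [← Matrix.trace_toLin'_eq, hp.trace]⟩

/-- **Proposition 6.3 (ii).** For `n ≥ 2` odd, the only `X ∈ su(n)` with
`X² = (tr(X²)/n)·Iₙ` is `X = 0`. -/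
theorem variety_trivial_of_odd (n : ℕ) (hn : 2 ≤ n) (hodd : Odd n)
    (X : Matrix (Fin n) (Fin n) ℂ) (hX : Xᴴ = -X) (hX0 : X.trace = 0)
    (h : X * X = ((X * X).trace / (n : ℂ)) • (1 : Matrix (Fin n) (Fin n) ℂ)) :
    X = 0 := by
  generalize (X * X).trace / (n : ℂ) = c at h
  obtain ⟨s, rfl⟩ := IsAlgClosed.exists_eq_mul_self c
  by_cases hs : s = 0
  · open scoped ComplexOrder in
    apply Matrix.conjTranspose_mul_self_eq_zero.mp
    rw [hX, Matrix.neg_mul, h, hs]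
    simp
  · exfalso
    obtain ⟨r, hr⟩ := exists_nat_trace_of_idempotent ((1 / 2 : ℂ) • (1 + s⁻¹ • X)) (by
      have h1 : (s⁻¹ • X) * (s⁻¹ • X) = 1 := by
        rw [Matrix.smul_mul, Matrix.mul_smul, h, smul_smul, smul_smul]
        have : s⁻¹ * s⁻¹ * (s * s) = 1 := by field_simp
        rw [this, one_smul]
      rw [Matrix.smul_mul, Matrix.mul_smul, add_mul, mul_add, mul_add, h1, one_mul, one_mul, mul_one]
      module)
    simp only [Matrix.trace_smul, Matrix.trace_add, hX0, Matrix.trace_one, Fintype.card_fin,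
      smul_eq_mul, mul_zero, add_zero] at hr
    have h2 : (n : ℂ) = ((2 * r : ℕ) : ℂ) := by
      push_cast
      rw [← hr]
      ring
    have h3 : n = 2 * r := by exact_mod_cast h2
    obtain ⟨k, hk⟩ := hodd
    omega
end

section
/- Let n = 2k with k ≥ 1 and let X ∈ su(n). Then X² = (tr(X²)/n)·Iₙ holds if and only if there exist t ∈ ℝ and a unitary matrix U ∈ SU(n) such that X = U·D·Uᴴ, where D is the block-diagonal matrix diag(i·t·I_k, -i·t·I_k) with I_k the k×k identity matrix. In other words, for n even the variety 𝒬 = {X ∈ su(n) | X² = (tr(X²)/n)·Iₙ} is the union over t ∈ ℝ of the SU(n)-conjugation orbits of diag(i·t·I_k, -i·t·I_k). -/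
/-!
The Hermitian matrix `-iX` is diagonalised by a unitary `V` with real eigenvalues `l`. If `X²` is
scalar, all `(l i)²` agree, so every `l i` is `t` or `-t` for one real `t`; since `tr X = 0`, for
`t ≠ 0` both signs occur exactly `k` times (`exists_perm_sign_sorted`), and a permutation of the
columns of `V` sorts them. A unitary diagonalisation can be moved into `SU(n)` without changing the
diagonal by rescaling one column by the conjugate of the determinant
(`exists_specialUnitary_diagonalization`). Conversely, the square of the diagonal matrix is
`-t²` times the identity, a property invariant under conjugation, and the scalar is then
determined by the trace.
-/

open Matrix

/-- The determinant of a diagonalising unitary can be normalised: multiplying one column by a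
phase does not change the conjugate of a diagonal matrix. -/
lemma exists_specialUnitary_diagonalization {n : Type*} [Fintype n] [DecidableEq n] (j : n)
    (V : Matrix n n ℂ) (hV : V ∈ Matrix.unitaryGroup n ℂ) (d : n → ℂ) :
    ∃ U ∈ Matrix.specialUnitaryGroup n ℂ, U * diagonal d * Uᴴ = V * diagonal d * Vᴴ := by
  have hdet : star V.det * V.det = 1 :=
    Unitary.star_mul_self_of_mem (Matrix.det_of_mem_unitary hV)
  set e : n → ℂ := Function.update 1 j (star V.det) with he
  have hee : ∀ i, e i * star (e i) = 1 := by
    intro i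
    by_cases h : i = j
    · subst h
      simpa [he] using hdet
    · simp [he, h]
  have hE : diagonal e * (diagonal e)ᴴ = 1 := by
    rw [diagonal_conjTranspose, diagonal_mul_diagonal, ← diagonal_one]
    congr 1
    funext i
    exact hee i
  have hEd : diagonal e * diagonal d * (diagonal e)ᴴ = diagonal d := by
    rw [diagonal_conjTranspose, diagonal_mul_diagonal, diagonal_mul_diagonal]
    congr 1
    funext i
    have := hee i
    simp only [Pi.star_apply]
    linear_combination d i * this
  refine ⟨V * diagonal e, ?_, ?_⟩
  · rw [Matrix.mem_specialUnitaryGroup_iff]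
    refine ⟨mul_mem hV (Matrix.mem_unitaryGroup_iff.2 hE), ?_⟩
    rw [det_mul, det_diagonal, he, Finset.prod_update_of_mem (Finset.mem_univ j)]
    simpa [mul_comm] using hdet
  · calc V * diagonal e * diagonal d * (V * diagonal e)ᴴ
        = V * (diagonal e * diagonal d * (diagonal e)ᴴ) * Vᴴ := by
          simp only [conjTranspose_mul, Matrix.mul_assoc]
      _ = _ := by rw [hEd]

/-- A family of `2k` reals with values in `{t, -t}` and sum zero takes each value `k` times (if
`t ≠ 0`), hence can be sorted. -/
lemma exists_perm_sign_sorted (k : ℕ) (l : Fin (2 * k) → ℝ) (t : ℝ)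
    (hl : ∀ i, l i = t ∨ l i = -t) (hs : ∑ i, l i = 0) :
    ∃ σ : Equiv.Perm (Fin (2 * k)), ∀ i, l (σ i) = if (i : ℕ) < k then t else -t := by
  classical
  by_cases ht : t = 0
  · refine ⟨1, fun i => ?_⟩
    have := hl i
    simp_all
  have hcard : Fintype.card {i : Fin (2 * k) // l i = t} = k := by
    rw [Fintype.card_subtype]
    -- `l i = 2t·[l i = t] - t`, so the sum is `2t·#{l = t} - 2kt`.
    have h1 : ∀ i, l i = (if l i = t then 2 * t else 0) - t := by
      intro i
      split_ifs with h
      · linarith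
      · have := (hl i).resolve_left h
        linarith
    rw [Finset.sum_congr rfl (fun i _ => h1 i), Finset.sum_sub_distrib, ← Finset.sum_filter] at hs
    simp only [Finset.sum_const, Finset.card_univ, Fintype.card_fin, nsmul_eq_mul] at hs
    push_cast at hs
    have h2 : (2 * t) * (((Finset.univ.filter fun i => l i = t).card : ℝ) - k) = 0 := by
      linear_combination hs
    have h3 := (mul_eq_zero.1 h2).resolve_left (by simpa using ht)
    exact_mod_cast sub_eq_zero.1 h3
  have hcard' : Fintype.card {i : Fin (2 * k) // (i : ℕ) < k} = k := by
    have e : {i : Fin (2 * k) // (i : ℕ) < k} ≃ Fin k :=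
      { toFun := fun i => ⟨i.1, i.2⟩
        invFun := fun i => ⟨⟨i, by omega⟩, i.2⟩
        left_inv := fun _ => rfl
        right_inv := fun _ => rfl }
    simpa using Fintype.card_congr e
  let e : {i : Fin (2 * k) // (i : ℕ) < k} ≃ {i : Fin (2 * k) // l i = t} :=
    Fintype.equivOfCardEq (hcard'.trans hcard.symm)
  refine ⟨e.extendSubtype, fun i => ?_⟩
  split_ifs with h
  · exact e.extendSubtype_mem i h
  · exact (hl _).resolve_left (e.extendSubtype_not_mem i h)

/-- **Proposition 6.3 (iii).** For `n = 2k` even, an element `X ∈ su(n)` satisfies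
`X² = (tr(X²)/n)·Iₙ` if and only if `X` is `SU(n)`-conjugate to the block-diagonal
matrix `diag(i·t·I_k, -i·t·I_k)` for some `t ∈ ℝ`. -/
theorem variety_eq_orbits_of_even (k : ℕ) (hk : 1 ≤ k)
    (X : Matrix (Fin (2 * k)) (Fin (2 * k)) ℂ) (hX : Xᴴ = -X) (hX0 : X.trace = 0) :
    X * X = ((X * X).trace / ((2 * k : ℕ) : ℂ)) • (1 : Matrix (Fin (2 * k)) (Fin (2 * k)) ℂ) ↔
      ∃ (t : ℝ) (U : Matrix (Fin (2 * k)) (Fin (2 * k)) ℂ),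
        U ∈ Matrix.specialUnitaryGroup (Fin (2 * k)) ℂ ∧
        X = U * Matrix.diagonal
              (fun i : Fin (2 * k) => if (i : ℕ) < k then (t : ℂ) * Complex.I else -((t : ℂ) * Complex.I)) *
            Uᴴ := by
  have hn : ((2 * k : ℕ) : ℂ) ≠ 0 := by
    exact_mod_cast (by omega : 2 * k ≠ 0)
  constructor
  · intro h
    generalize (X * X).trace / ((2 * k : ℕ) : ℂ) = c at h
    have hH : ((-Complex.I) • X).IsHermitian := by
      simp [Matrix.IsHermitian, conjTranspose_smul, hX]
    set V : Matrix (Fin (2 * k)) (Fin (2 * k)) ℂ :=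
      hH.eigenvectorUnitary.1 with hVdef
    have hV : V ∈ Matrix.unitaryGroup (Fin (2 * k)) ℂ := hH.eigenvectorUnitary.2
    have hVV : Vᴴ * V = 1 := Matrix.mem_unitaryGroup_iff'.1 hV
    set l := hH.eigenvalues with hl
    have hXV : X = V * diagonal (fun i => (l i : ℂ) * Complex.I) * Vᴴ := by
      have hs := hH.spectral_theorem
      rw [Unitary.conjStarAlgAut_apply] at hs
      have h1 : X = Complex.I • ((-Complex.I) • X) := by simp [smul_smul]
      have h2 : diagonal (fun i => (l i : ℂ) * Complex.I)
          = Complex.I • diagonal (fun i => (l i : ℂ)) := by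
        rw [← diagonal_smul]
        congr 1
        funext i
        simp [mul_comm]
      rw [h2, Matrix.mul_smul, Matrix.smul_mul, h1]
      congr 1
    have hsum : ∑ i, l i = 0 := by
      have h1 := hH.trace_eq_sum_eigenvalues
      rw [trace_smul, hX0, smul_zero] at h1
      have h2 : ((∑ i, l i : ℝ) : ℂ) = 0 := by
        push_cast
        exact h1.symm
      exact_mod_cast h2
    have hsq : ∀ i, (l i : ℂ) * Complex.I * ((l i : ℂ) * Complex.I) = c := by
      have h1 : diagonal (fun i => (l i : ℂ) * Complex.I * ((l i : ℂ) * Complex.I))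
          = c • (1 : Matrix (Fin (2 * k)) (Fin (2 * k)) ℂ) := by
        rw [← diagonal_mul_diagonal]
        set D := diagonal (fun i => (l i : ℂ) * Complex.I)
        calc D * D = (Vᴴ * V) * D * (Vᴴ * V) * D * (Vᴴ * V) := by simp [hVV]
          _ = Vᴴ * ((V * D * Vᴴ) * (V * D * Vᴴ)) * V := by simp only [Matrix.mul_assoc]
          _ = c • 1 := by
            rw [← hXV, h, Matrix.mul_smul, Matrix.smul_mul, Matrix.mul_one, hVV]
      intro i
      simpa using congrFun (congrFun h1 i) i
    let j : Fin (2 * k) := ⟨0, by omega⟩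
    have hpm : ∀ i, l i = l j ∨ l i = -l j := by
      intro i
      have h1 : ((l i * l i : ℝ) : ℂ) = ((l j * l j : ℝ) : ℂ) := by
        push_cast
        linear_combination hsq j - hsq i + ((l i : ℂ) ^ 2 - (l j : ℂ) ^ 2) * Complex.I_sq
      exact mul_self_eq_mul_self_iff.1 (Complex.ofReal_injective h1)
    obtain ⟨σ, hσ⟩ := exists_perm_sign_sorted k l (l j) hpm hsum
    have hW : V.submatrix id σ ∈ Matrix.unitaryGroup (Fin (2 * k)) ℂ := by
      rw [Matrix.mem_unitaryGroup_iff', star_eq_conjTranspose, conjTranspose_submatrix]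
      have := Matrix.submatrix_mul_equiv Vᴴ V σ (Equiv.refl _) σ
      simp only [Equiv.coe_refl] at this
      rw [this, hVV, submatrix_one_equiv]
    obtain ⟨U, hU, hUW⟩ := exists_specialUnitary_diagonalization j _ hW
      (fun i : Fin (2 * k) =>
        if (i : ℕ) < k then (l j : ℂ) * Complex.I else -((l j : ℂ) * Complex.I))
    refine ⟨l j, U, hU, ?_⟩
    rw [hUW]
    have hd : diagonal (fun i : Fin (2 * k) =>
        if (i : ℕ) < k then (l j : ℂ) * Complex.I else -((l j : ℂ) * Complex.I))
        = (diagonal (fun i => (l i : ℂ) * Complex.I)).submatrix σ σ := by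
      rw [submatrix_diagonal_equiv]
      congr 1
      funext i
      simp only [Function.comp_apply, hσ i]
      split_ifs <;> simp
    rw [hd, conjTranspose_submatrix, submatrix_mul_equiv, submatrix_mul_equiv, ← hXV,
      submatrix_id_id]
  · rintro ⟨t, U, hU, hXU⟩
    have hU' := (Matrix.mem_specialUnitaryGroup_iff.1 hU).1
    have hUU : Uᴴ * U = 1 := Matrix.mem_unitaryGroup_iff'.1 hU'
    have hUU' : U * Uᴴ = 1 := Matrix.mem_unitaryGroup_iff.1 hU'
    have hXX : X * X = (-(t : ℂ) ^ 2) • (1 : Matrix (Fin (2 * k)) (Fin (2 * k)) ℂ) := by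
      set D := diagonal (fun i : Fin (2 * k) =>
        if (i : ℕ) < k then (t : ℂ) * Complex.I else -((t : ℂ) * Complex.I)) with hD
      have hDD : D * D = (-(t : ℂ) ^ 2) • (1 : Matrix (Fin (2 * k)) (Fin (2 * k)) ℂ) := by
        rw [hD, diagonal_mul_diagonal, smul_one_eq_diagonal]
        congr 1
        funext i
        split_ifs <;> linear_combination (t : ℂ) ^ 2 * Complex.I_sq
      calc X * X = U * (D * (Uᴴ * U) * D) * Uᴴ := by
            rw [hXU]
            simp only [Matrix.mul_assoc]
        _ = _ := by
            rw [hUU, Matrix.mul_one, hDD, Matrix.mul_smul, Matrix.smul_mul, Matrix.mul_one, hUU']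
    rw [hXX, trace_smul, trace_one, Fintype.card_fin, smul_eq_mul, mul_div_cancel_right₀ _ hn]
end

section
/- Let p, q ≥ 2. For A ∈ su(p), let ρ(A) denote the ℝ-linear endomorphism M ↦ A·M of the real vector space of p×q complex matrices. Then for all A, A' ∈ su(p), -½·tr_ℝ(ρ(A) ∘ ρ(A')) = -(q/(2p))·B_{su(p)}(A, A'), where tr_ℝ is the trace of an ℝ-linear endomorphism and B_{su(p)} is the Killing form of su(p). Equivalently, B_{su(p)}(A,A') = 2p·Re(tr(A·A')). -/
/-!
Everything reduces to the real trace of `M ↦ P * M * Q`, which is `2 Re (tr P * tr Q)`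
(`trace_sandwich`). With `Q = 1` it gives `tr_ℝ (ρ(A) ∘ ρ(A')) = 2 q Re tr (A * A')`.

For the Killing form (`killing_eq`), let `F` be the extension of `ad A ∘ ad A'` to all complex
matrices. The trace of `F` on `su(p)` equals the trace on all matrices of `F` composed with the
projection onto `su(p)`. As `F` kills scalar matrices, this composite is
`Z ↦ F ((Z - Zᴴ) / 2)`. The part `F ∘ (·)ᴴ` is conjugate-linear and so has real trace zero,
leaving half the trace of `F`; expanding `F` into four maps `M ↦ P * M * Q` and using
`tr A = tr A' = 0` gives `2 p Re tr (A * A')`.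
-/

open Matrix

lemma commutator_mem {n : ℕ} {X Y : Matrix (Fin n) (Fin n) ℂ}
    (hX : X ∈ su n) (hY : Y ∈ su n) : X * Y - Y * X ∈ su n := by
  obtain ⟨hX1, hX2⟩ := hX
  obtain ⟨hY1, hY2⟩ := hY
  constructor
  · rw [conjTranspose_sub, conjTranspose_mul, conjTranspose_mul, hX1, hY1]
    simp
  · simp [Matrix.trace_sub, Matrix.trace_mul_comm X Y]

/-- The adjoint action `ad X = [X, ·]` of an element of `su(n)`, as a real-linear
endomorphism of `su(n)`. -/
noncomputable def ad {n : ℕ} (X : su n) : su n →ₗ[ℝ] su n where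
  toFun Y := ⟨(X : Matrix (Fin n) (Fin n) ℂ) * Y - (Y : Matrix (Fin n) (Fin n) ℂ) * X,
    commutator_mem X.2 Y.2⟩
  map_add' Y Z := by
    apply Subtype.ext
    simp [Matrix.mul_add, Matrix.add_mul]
    abel
  map_smul' c Y := by
    apply Subtype.ext
    simp [Matrix.mul_smul, Matrix.smul_mul, smul_sub]

/-- The Killing form `B(X,Y) = tr(ad X ∘ ad Y)` of the real Lie algebra `su(n)`. -/
noncomputable def killing (n : ℕ) (X Y : su n) : ℝ :=
  LinearMap.trace ℝ (su n) (ad X ∘ₗ ad Y)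

/-- Left multiplication by a `p × p` matrix `A` on the real vector space of `p × q`
complex matrices, as a real-linear endomorphism. -/
noncomputable def rho (p q : ℕ) (A : Matrix (Fin p) (Fin p) ℂ) :
    Matrix (Fin p) (Fin q) ℂ →ₗ[ℝ] Matrix (Fin p) (Fin q) ℂ where
  toFun M := A * M
  map_add' M N := Matrix.mul_add A M N
  map_smul' c M := by simp [Matrix.mul_smul]

/-- The real-linear endomorphism `M ↦ P * M * Q` of the `p × q` complex matrices. -/
noncomputable def sandwich {p q : ℕ} (P : Matrix (Fin p) (Fin p) ℂ)
    (Q : Matrix (Fin q) (Fin q) ℂ) :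
    Matrix (Fin p) (Fin q) ℂ →ₗ[ℝ] Matrix (Fin p) (Fin q) ℂ where
  toFun M := P * M * Q
  map_add' M N := by rw [Matrix.mul_add, Matrix.add_mul]
  map_smul' c M := by simp

/-- Over `ℂ` the trace of `M ↦ P * M * Q` is `tr P * tr Q`; restricting scalars to `ℝ` takes
twice the real part. -/
lemma trace_sandwich {p q : ℕ} (P : Matrix (Fin p) (Fin p) ℂ) (Q : Matrix (Fin q) (Fin q) ℂ) :
    LinearMap.trace ℝ _ (sandwich P Q) = 2 * (P.trace * Q.trace).re := by
  let b := Complex.basisOneI.smulTower (Matrix.stdBasis ℂ (Fin p) (Fin q))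
  have h : ∀ i j, LinearMap.toMatrix b b (sandwich P Q) (i, j) (i, j)
      = (P j.1 j.1 * Q j.2 j.2).re := by
    rintro i ⟨j, k⟩
    have key : ∀ c : ℂ, (P * (c • Matrix.single j k (1 : ℂ)) * Q) j k = c * (P j j * Q k k) := by
      intro c
      simp [Matrix.mul_apply, Matrix.single_apply, ite_and]
      ring
    have hrepr : ∀ (M : Matrix (Fin p) (Fin q) ℂ),
        (Matrix.stdBasis ℂ (Fin p) (Fin q)).repr M (j, k) = M j k := by
      intro M
      simp [Matrix.stdBasis]
    rw [LinearMap.toMatrix_apply, Module.Basis.smulTower_repr, hrepr,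
      Module.Basis.smulTower_apply, Matrix.stdBasis_eq_single]
    change Complex.basisOneI.repr ((P * (Complex.basisOneI i • Matrix.single j k (1 : ℂ) :
      Matrix (Fin p) (Fin q) ℂ) * Q) j k) i = _
    rw [key]
    fin_cases i <;> simp
  rw [LinearMap.trace_eq_matrix_trace ℝ b, Matrix.trace, Fintype.sum_prod_type]
  simp only [Matrix.diag_apply, h]
  simp only [Fin.sum_univ_two, Fintype.sum_prod_type, Matrix.trace, Matrix.diag_apply,
    Finset.sum_mul_sum, Complex.re_sum]
  ring

/-- A conjugate-linear endomorphism anticommutes with multiplication by `i`, hence has real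
trace zero. -/
lemma trace_eq_zero_of_antilinear {p q : ℕ}
    (G : Matrix (Fin p) (Fin q) ℂ →ₗ[ℝ] Matrix (Fin p) (Fin q) ℂ)
    (hG : ∀ M, G (Complex.I • M) = -(Complex.I • G M)) : LinearMap.trace ℝ _ G = 0 := by
  let J : Matrix (Fin p) (Fin q) ℂ →ₗ[ℝ] Matrix (Fin p) (Fin q) ℂ :=
    { toFun M := Complex.I • M
      map_add' M N := smul_add _ _ _
      map_smul' c M := smul_comm _ _ _ }
  have h1 : (J ∘ₗ G) ∘ₗ J = G := by
    ext1 M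
    change Complex.I • G (Complex.I • M) = G M
    simp [hG, smul_smul]
  have h2 : J ∘ₗ (J ∘ₗ G) = -G := by
    ext1 M
    change Complex.I • Complex.I • G M = -G M
    simp [smul_smul]
  have h3 := LinearMap.trace_comp_comm' (J ∘ₗ G) J
  rw [h1, h2, map_neg] at h3
  linarith

/-- The projection `Z ↦ (Z - Zᴴ)/2 - tr((Z - Zᴴ)/2)/n` of all complex matrices onto `su n`. -/
noncomputable def suProj (n : ℕ) (hn : n ≠ 0) : Matrix (Fin n) (Fin n) ℂ →ₗ[ℝ] su n where
  toFun Z := ⟨(1 / 2 : ℝ) • ((Z - Zᴴ) - ((n : ℂ)⁻¹ * (Z - Zᴴ).trace) • 1), by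
    apply Submodule.smul_mem
    constructor
    · simp only [conjTranspose_sub, conjTranspose_conjTranspose, conjTranspose_smul,
        conjTranspose_one, trace_sub, trace_conjTranspose, star_mul', star_sub, star_star,
        star_inv₀, star_natCast]
      rw [← neg_sub (Z.trace) (star Z.trace), mul_neg, neg_smul]
      abel
    · have : (n : ℂ) ≠ 0 := Nat.cast_ne_zero.mpr hn
      rw [trace_sub, trace_smul, trace_one, Fintype.card_fin, smul_eq_mul]
      field_simp
      ring⟩
  map_add' Z W := by
    apply Subtype.ext
    simp only [Submodule.coe_add, conjTranspose_add, trace_sub, trace_add, ← smul_add]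
    congr 1
    module
  map_smul' c Z := by
    apply Subtype.ext
    simp only [conjTranspose_smul, trace_sub, trace_smul, SetLike.val_smul, star_trivial,
      RingHom.id_apply, smul_comm c (1 / 2 : ℝ)]
    congr 1
    rw [smul_sub, smul_sub, ← smul_sub c Z.trace, mul_smul_comm, smul_assoc]

lemma suProj_comp_subtype (n : ℕ) (hn : n ≠ 0) :
    suProj n hn ∘ₗ (su n).subtype = LinearMap.id := by
  ext1 ⟨Z, hZ, hZ'⟩
  apply Subtype.ext
  change (1 / 2 : ℝ) • ((Z - Zᴴ) - ((n : ℂ)⁻¹ * (Z - Zᴴ).trace) • 1) = Z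
  rw [hZ, trace_sub, trace_neg, hZ']
  simp only [neg_zero, sub_zero, mul_zero, zero_smul]
  module

/-- `ad X ∘ ad Y` extended to all complex matrices, expanded into four sandwich maps. -/
noncomputable def adAd {n : ℕ} (X Y : Matrix (Fin n) (Fin n) ℂ) :
    Matrix (Fin n) (Fin n) ℂ →ₗ[ℝ] Matrix (Fin n) (Fin n) ℂ :=
  sandwich (X * Y) 1 - sandwich X Y - sandwich Y X + sandwich 1 (Y * X)

lemma adAd_apply {n : ℕ} (X Y Z : Matrix (Fin n) (Fin n) ℂ) :
    adAd X Y Z = X * (Y * Z - Z * Y) - (Y * Z - Z * Y) * X := by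
  change X * Y * Z * 1 - X * Z * Y - Y * Z * X + 1 * Z * (Y * X) = _
  noncomm_ring

/-- Extend `ad X ∘ ad Y` to `F` on all matrices and insert the projection onto `su n`. As `F`
kills scalar matrices, the trace is half that of `F` minus half that of `F ∘ (·)ᴴ`, and the
latter vanishes by conjugate-linearity. -/
lemma killing_eq {n : ℕ} (hn : n ≠ 0) (X Y : su n) :
    killing n X Y = 2 * (n : ℝ) * ((X.1 * Y.1).trace).re := by
  let C : Matrix (Fin n) (Fin n) ℂ →ₗ[ℝ] Matrix (Fin n) (Fin n) ℂ :=
    { toFun M := Mᴴ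
      map_add' M N := conjTranspose_add _ _
      map_smul' c M := by simp }
  have h1 : ad X ∘ₗ ad Y = suProj n hn ∘ₗ (adAd X.1 Y.1 ∘ₗ (su n).subtype) := by
    have : adAd X.1 Y.1 ∘ₗ (su n).subtype = (su n).subtype ∘ₗ (ad X ∘ₗ ad Y) := by
      ext1 Z
      exact adAd_apply _ _ _
    rw [this, ← LinearMap.comp_assoc, suProj_comp_subtype, LinearMap.id_comp]
  have h2 : (adAd X.1 Y.1 ∘ₗ (su n).subtype) ∘ₗ suProj n hn
      = (1 / 2 : ℝ) • (adAd X.1 Y.1 - adAd X.1 Y.1 ∘ₗ C) := by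
    ext1 Z
    change adAd X.1 Y.1 ((1 / 2 : ℝ) • ((Z - Zᴴ) - ((n : ℂ)⁻¹ * (Z - Zᴴ).trace) • 1))
      = (1 / 2 : ℝ) • (adAd X.1 Y.1 Z - adAd X.1 Y.1 Zᴴ)
    rw [map_smul, map_sub, map_sub]
    have : ∀ c : ℂ, adAd X.1 Y.1 (c • 1) = 0 := by
      intro c
      simp [adAd_apply]
    rw [this, sub_zero]
  have h3 : LinearMap.trace ℝ _ (adAd X.1 Y.1 ∘ₗ C) = 0 := by
    apply trace_eq_zero_of_antilinear
    intro M
    change adAd X.1 Y.1 (Complex.I • M)ᴴ = -(Complex.I • adAd X.1 Y.1 Mᴴ)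
    simp only [adAd_apply, conjTranspose_smul, Matrix.mul_sub, Matrix.sub_mul, Matrix.mul_smul,
      Matrix.smul_mul, smul_sub, Complex.star_def, Complex.conj_I, neg_smul, Matrix.mul_neg,
      Matrix.neg_mul]
    abel
  rw [killing, h1, LinearMap.trace_comp_comm', h2, map_smul, map_sub, h3]
  simp only [adAd, map_add, map_sub, trace_sandwich, trace_one, Fintype.card_fin, X.2.2, Y.2.2,
    trace_mul_comm Y.1 X.1]
  simp
  ring

/-- **Lemma 3.9.** For the isotropy representation of the complex Grassmannian
`SU(p+q)/S(U(p)×U(q))`: with `su(p)` acting by left multiplication `ρ` on the space of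
`p × q` complex matrices, one has `-½·tr_ℝ(ρ(A)∘ρ(A')) = -(q/(2p))·B_{su(p)}(A, A')`;
equivalently `B_{su(p)}(A, A') = 2p·Re(tr(A·A'))`. -/
theorem lambda2_inner_product_vs_killing (p q : ℕ) (hp : 2 ≤ p) (hq : 2 ≤ q)
    (A A' : Matrix (Fin p) (Fin p) ℂ) (hA : A ∈ su p) (hA' : A' ∈ su p) :
    -(1 / 2 : ℝ) * LinearMap.trace ℝ (Matrix (Fin p) (Fin q) ℂ) (rho p q A ∘ₗ rho p q A') =
        -((q : ℝ) / (2 * (p : ℝ))) * killing p ⟨A, hA⟩ ⟨A', hA'⟩ ∧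
      killing p ⟨A, hA⟩ ⟨A', hA'⟩ = 2 * (p : ℝ) * ((A * A').trace).re := by
  have hp0 : p ≠ 0 := by omega
  have hk := killing_eq hp0 ⟨A, hA⟩ ⟨A', hA'⟩
  refine ⟨?_, hk⟩
  have hr : rho p q A ∘ₗ rho p q A' = sandwich (A * A') 1 := by
    ext1 M
    change A * (A' * M) = A * A' * M * (1 : Matrix (Fin q) (Fin q) ℂ)
    rw [Matrix.mul_one, Matrix.mul_assoc]
  have hpR : (p : ℝ) ≠ 0 := Nat.cast_ne_zero.mpr hp0
  rw [hk, hr, trace_sandwich, trace_one, Fintype.card_fin, Complex.mul_re, Complex.natCast_re,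
    Complex.natCast_im, mul_zero, sub_zero]
  field_simp
end

section
/- Let p, q ≥ 1. The ℝ-linear span of the set {i·(A ⊗ₖ B) : A ∈ u(p), B ∈ u(q)}, where ⊗ₖ denotes the Kronecker product, equals u(pq), the space of all skew-Hermitian (pq)×(pq) complex matrices. -/
/-!
Both inclusions rest on `(A ⊗ₖ B)ᴴ = Aᴴ ⊗ₖ Bᴴ`. For skew-Hermitian `A`, `B` this makes `A ⊗ₖ B`
Hermitian, so `i (A ⊗ₖ B)` is skew-Hermitian.

Conversely a skew-Hermitian `X` equals `(X - Xᴴ) / 2`, so it suffices that `M - Mᴴ` lies in the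
span for every `M`. This condition is additive in `M`, and every matrix is a sum of matrices
`A ⊗ₖ B` (scaled matrix units). For these, splitting `A` and `B` into Hermitian and skew-Hermitian
parts gives `2 (M - Mᴴ) = (A - Aᴴ) ⊗ₖ (B + Bᴴ) + (A + Aᴴ) ⊗ₖ (B - Bᴴ)`, and multiplying the
Hermitian factor of each summand by `i` makes it skew-Hermitian
(`kronecker_sub_conjTranspose`).
-/

open Matrix Kronecker

/-- The real vector space `u(ι)` of skew-Hermitian complex matrices indexed by `ι`. -/
noncomputable def skewHerm (ι : Type*) [Fintype ι] [DecidableEq ι] :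
    Submodule ℝ (Matrix ι ι ℂ) where
  carrier := {X | Xᴴ = -X}
  add_mem' := by
    intro X Y hX hY
    simp only [Set.mem_setOf_eq] at *
    rw [conjTranspose_add, hX, hY, neg_add]
  zero_mem' := by simp
  smul_mem' := by
    intro c X hX
    simp only [Set.mem_setOf_eq] at *
    rw [conjTranspose_smul, hX]
    simp

/-- Twice the skew-Hermitian part of a Kronecker product, as a real combination of products
`i (C ⊗ₖ D)` with skew-Hermitian factors. -/
lemma kronecker_sub_conjTranspose {m n : Type*} (A : Matrix m m ℂ) (B : Matrix n n ℂ) :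
    A ⊗ₖ B - (A ⊗ₖ B)ᴴ =
      (-1 / 2 : ℝ) • (Complex.I • ((A - Aᴴ) ⊗ₖ (Complex.I • (B + Bᴴ)))) +
      (-1 / 2 : ℝ) • (Complex.I • ((Complex.I • (A + Aᴴ)) ⊗ₖ (B - Bᴴ))) := by
  ext ⟨i, j⟩ ⟨k, l⟩
  simp only [Matrix.sub_apply, Matrix.add_apply, Matrix.smul_apply, kronecker_apply, conjTranspose_apply,
    Complex.real_smul, smul_eq_mul, star_mul']
  push_cast
  linear_combination (1 / 2 : ℂ) * ((A i k - star (A k i)) * (B j l + star (B l j)) +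
    (A i k + star (A k i)) * (B j l - star (B l j))) * Complex.I_sq

lemma conjTranspose_sub_conjTranspose_self {m : Type*} (A : Matrix m m ℂ) :
    (A - Aᴴ)ᴴ = -(A - Aᴴ) := by
  simp

lemma conjTranspose_I_smul_add_self {m : Type*} (A : Matrix m m ℂ) :
    (Complex.I • (A + Aᴴ))ᴴ = -(Complex.I • (A + Aᴴ)) := by
  simp [conjTranspose_smul, add_comm]

/-- **Lemma 3.14 (first part).** For `p, q ≥ 1`, the real span of the matrices
`i·(A ⊗ₖ B)` with `A ∈ u(p)` and `B ∈ u(q)` is all of `u(pq)`, the space of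
skew-Hermitian `(pq) × (pq)` matrices. -/
theorem span_kronecker_skewHerm (p q : ℕ) (hp : 1 ≤ p) (hq : 1 ≤ q) :
    Submodule.span ℝ {X : Matrix (Fin p × Fin q) (Fin p × Fin q) ℂ |
        ∃ (A : Matrix (Fin p) (Fin p) ℂ) (B : Matrix (Fin q) (Fin q) ℂ),
          Aᴴ = -A ∧ Bᴴ = -B ∧ X = Complex.I • (A ⊗ₖ B)} =
      skewHerm (Fin p × Fin q) := by
  apply le_antisymm
  · rw [Submodule.span_le]
    rintro X ⟨A, B, hA, hB, rfl⟩
    change (Complex.I • (A ⊗ₖ B))ᴴ = -(Complex.I • (A ⊗ₖ B))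
    rw [conjTranspose_smul, conjTranspose_kronecker, hA, hB]
    ext ⟨i, j⟩ ⟨k, l⟩
    simp
  · intro X hX
    replace hX : Xᴴ = -X := hX
    set S := Submodule.span ℝ {X : Matrix (Fin p × Fin q) (Fin p × Fin q) ℂ |
        ∃ (A : Matrix (Fin p) (Fin p) ℂ) (B : Matrix (Fin q) (Fin q) ℂ),
          Aᴴ = -A ∧ Bᴴ = -B ∧ X = Complex.I • (A ⊗ₖ B)}
    have key : ∀ M : Matrix (Fin p × Fin q) (Fin p × Fin q) ℂ, M - Mᴴ ∈ S := by
      intro M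
      induction M using Matrix.induction_on' with
      | h_zero => simp
      | h_add M N hM hN =>
        rw [conjTranspose_add, add_sub_add_comm]
        exact S.add_mem hM hN
      | h_std_basis a b x =>
        have hab : single a b x = single a.1 b.1 x ⊗ₖ single a.2 b.2 (1 : ℂ) := by
          rw [single_kronecker_single, mul_one]
        rw [hab, kronecker_sub_conjTranspose]
        exact S.add_mem
          (S.smul_mem _ (Submodule.subset_span ⟨_, _, conjTranspose_sub_conjTranspose_self _,
            conjTranspose_I_smul_add_self _, rfl⟩))
          (S.smul_mem _ (Submodule.subset_span ⟨_, _, conjTranspose_I_smul_add_self _,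
            conjTranspose_sub_conjTranspose_self _, rfl⟩))
    have hX2 : X = (1 / 2 : ℝ) • (X - Xᴴ) := by
      rw [hX, sub_neg_eq_add, ← two_smul ℝ X, smul_smul]
      norm_num
    rw [hX2]
    exact S.smul_mem _ (key X)
end

section
/- Let p, q ≥ 2. The real vector space u(pq) of skew-Hermitian (pq)×(pq) complex matrices decomposes as the internal direct sum of the following four ℝ-subspaces: (1) ℝ·(i·I_{pq}); (2) {A ⊗ₖ I_q : A ∈ su(p)}; (3) {I_p ⊗ₖ B : B ∈ su(q)}; (4) the ℝ-linear span of {i·(A ⊗ₖ B) : A ∈ su(p), B ∈ su(q)}. That is, every skew-Hermitian (pq)×(pq) matrix is uniquely a sum of elements of these four subspaces. -/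
/-!
Uniqueness comes from the two partial traces. Both vanish on `S4`, while `ptrSnd` kills `S3`
and `ptrFst` kills `S2`; hence from a vanishing sum `c i 1 + A ⊗ 1 + 1 ⊗ B + Z = 0` one reads off
`q (c i 1 + A) = 0` and `p (c i 1 + B) = 0`. Since `A` and `B` are traceless, this gives `c = 0`,
`A = 0`, `B = 0`, and therefore `Z = 0`.

For existence, `X = (X - Xᴴ) / 2`, so by expanding `X` in matrix units it suffices to treat
`A ⊗ B - (A ⊗ B)ᴴ` for arbitrary complex `A`, `B`. Writing `A = A₁ + i A₂`, `B = B₁ + i B₂` with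
skew-Hermitian parts, this equals `2 i (A₁ ⊗ B₂ + A₂ ⊗ B₁)`. Finally `i (A ⊗ B)` with `A`, `B`
skew-Hermitian is split by separating from each factor its trace part, a real multiple of `i 1`.
-/

open Matrix Kronecker

variable (p q : ℕ)

/-- The line `ℝ·(i·I_{pq})`. -/
noncomputable def S1 : Submodule ℝ (Matrix (Fin p × Fin q) (Fin p × Fin q) ℂ) :=
  Submodule.span ℝ {Complex.I • (1 : Matrix (Fin p × Fin q) (Fin p × Fin q) ℂ)}

/-- The subspace `{A ⊗ₖ I_q : A ∈ su(p)}`. -/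
noncomputable def S2 : Submodule ℝ (Matrix (Fin p × Fin q) (Fin p × Fin q) ℂ) :=
  Submodule.span ℝ {X | ∃ A : Matrix (Fin p) (Fin p) ℂ,
    Aᴴ = -A ∧ A.trace = 0 ∧ X = A ⊗ₖ (1 : Matrix (Fin q) (Fin q) ℂ)}

/-- The subspace `{I_p ⊗ₖ B : B ∈ su(q)}`. -/
noncomputable def S3 : Submodule ℝ (Matrix (Fin p × Fin q) (Fin p × Fin q) ℂ) :=
  Submodule.span ℝ {X | ∃ B : Matrix (Fin q) (Fin q) ℂ,
    Bᴴ = -B ∧ B.trace = 0 ∧ X = (1 : Matrix (Fin p) (Fin p) ℂ) ⊗ₖ B}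

/-- The subspace spanned by `{i·(A ⊗ₖ B) : A ∈ su(p), B ∈ su(q)}`. -/
noncomputable def S4 : Submodule ℝ (Matrix (Fin p × Fin q) (Fin p × Fin q) ℂ) :=
  Submodule.span ℝ {X | ∃ (A : Matrix (Fin p) (Fin p) ℂ) (B : Matrix (Fin q) (Fin q) ℂ),
    Aᴴ = -A ∧ A.trace = 0 ∧ Bᴴ = -B ∧ B.trace = 0 ∧ X = Complex.I • (A ⊗ₖ B)}

/-- The partial trace over the second tensor factor. -/
noncomputable def ptrSnd : Matrix (Fin p × Fin q) (Fin p × Fin q) ℂ →ₗ[ℝ]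
    Matrix (Fin p) (Fin p) ℂ where
  toFun X := Matrix.of fun i i' => ∑ j, X (i, j) (i', j)
  map_add' X Y := by ext; simp [Finset.sum_add_distrib]
  map_smul' c X := by ext; simp [Finset.mul_sum]

/-- The partial trace over the first tensor factor. -/
noncomputable def ptrFst : Matrix (Fin p × Fin q) (Fin p × Fin q) ℂ →ₗ[ℝ]
    Matrix (Fin q) (Fin q) ℂ where
  toFun X := Matrix.of fun j j' => ∑ i, X (i, j) (i, j')
  map_add' X Y := by ext; simp [Finset.sum_add_distrib]
  map_smul' c X := by ext; simp [Finset.mul_sum]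

lemma ptrSnd_kronecker (A : Matrix (Fin p) (Fin p) ℂ) (B : Matrix (Fin q) (Fin q) ℂ) :
    ptrSnd p q (A ⊗ₖ B) = B.trace • A := by
  ext i i'
  simp [ptrSnd, Matrix.trace, ← Finset.mul_sum, mul_comm]

lemma ptrFst_kronecker (A : Matrix (Fin p) (Fin p) ℂ) (B : Matrix (Fin q) (Fin q) ℂ) :
    ptrFst p q (A ⊗ₖ B) = A.trace • B := by
  ext i i'
  simp [ptrFst, Matrix.trace, ← Finset.sum_mul]

lemma mem_S1_iff (X : Matrix (Fin p × Fin q) (Fin p × Fin q) ℂ) :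
    X ∈ S1 p q ↔ ∃ c : ℝ, X = ((c : ℂ) * Complex.I) •
      ((1 : Matrix (Fin p) (Fin p) ℂ) ⊗ₖ (1 : Matrix (Fin q) (Fin q) ℂ)) := by
  have key (c : ℝ) : c • Complex.I • (1 : Matrix (Fin p × Fin q) (Fin p × Fin q) ℂ) =
      ((c : ℂ) * Complex.I) •
      ((1 : Matrix (Fin p) (Fin p) ℂ) ⊗ₖ (1 : Matrix (Fin q) (Fin q) ℂ)) := by
    rw [one_kronecker_one, mul_smul, Complex.coe_smul]
  simp only [S1, Submodule.mem_span_singleton, key, eq_comm]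

lemma exists_of_mem_S2 {X : Matrix (Fin p × Fin q) (Fin p × Fin q) ℂ} (hX : X ∈ S2 p q) :
    ∃ A : Matrix (Fin p) (Fin p) ℂ, A.trace = 0 ∧
      X = A ⊗ₖ (1 : Matrix (Fin q) (Fin q) ℂ) := by
  induction hX using Submodule.span_induction with
  | mem X h => obtain ⟨A, -, h0, rfl⟩ := h; exact ⟨A, h0, rfl⟩
  | zero => exact ⟨0, by simp, by simp⟩
  | add X Y _ _ h h' =>
    obtain ⟨A, h0, rfl⟩ := h
    obtain ⟨B, h1, rfl⟩ := h'
    exact ⟨A + B, by simp [h0, h1], by rw [add_kronecker]⟩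
  | smul c X _ h =>
    obtain ⟨A, h0, rfl⟩ := h
    exact ⟨c • A, by simp [h0], by rw [smul_kronecker]⟩

lemma exists_of_mem_S3 {X : Matrix (Fin p × Fin q) (Fin p × Fin q) ℂ} (hX : X ∈ S3 p q) :
    ∃ B : Matrix (Fin q) (Fin q) ℂ, B.trace = 0 ∧
      X = (1 : Matrix (Fin p) (Fin p) ℂ) ⊗ₖ B := by
  induction hX using Submodule.span_induction with
  | mem X h => obtain ⟨A, -, h0, rfl⟩ := h; exact ⟨A, h0, rfl⟩
  | zero => exact ⟨0, by simp, by simp⟩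
  | add X Y _ _ h h' =>
    obtain ⟨A, h0, rfl⟩ := h
    obtain ⟨B, h1, rfl⟩ := h'
    exact ⟨A + B, by simp [h0, h1], by rw [kronecker_add]⟩
  | smul c X _ h =>
    obtain ⟨A, h0, rfl⟩ := h
    exact ⟨c • A, by simp [h0], by rw [kronecker_smul]⟩

lemma ptr_eq_zero_of_mem_S4 {X : Matrix (Fin p × Fin q) (Fin p × Fin q) ℂ} (hX : X ∈ S4 p q) :
    ptrSnd p q X = 0 ∧ ptrFst p q X = 0 := by
  have h : S4 p q ≤ LinearMap.ker (ptrSnd p q) ⊓ LinearMap.ker (ptrFst p q) := by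
    refine Submodule.span_le.2 ?_
    rintro _ ⟨A, B, -, hA, -, hB, rfl⟩
    simp only [SetLike.mem_coe, Submodule.mem_inf, LinearMap.mem_ker]
    constructor
    · rw [← smul_kronecker, ptrSnd_kronecker, hB, zero_smul]
    · rw [← kronecker_smul, ptrFst_kronecker, hA, zero_smul]
  exact h hX

/-- The four subspaces are independent. -/
lemma eq_zero_of_sum_eq_zero_s11 (hp : p ≠ 0) (hq : q ≠ 0)
    {a b c d : Matrix (Fin p × Fin q) (Fin p × Fin q) ℂ}
    (ha : a ∈ S1 p q) (hb : b ∈ S2 p q) (hc : c ∈ S3 p q) (hd : d ∈ S4 p q)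
    (h : a + b + c + d = 0) : a = 0 ∧ b = 0 ∧ c = 0 ∧ d = 0 := by
  obtain ⟨t, rfl⟩ := (mem_S1_iff p q a).1 ha
  obtain ⟨A, hA, rfl⟩ := exists_of_mem_S2 p q hb
  obtain ⟨B, hB, rfl⟩ := exists_of_mem_S3 p q hc
  obtain ⟨h1, h2⟩ := ptr_eq_zero_of_mem_S4 p q hd
  have hp' : (p : ℂ) ≠ 0 := by exact_mod_cast hp
  have hq' : (q : ℂ) ≠ 0 := by exact_mod_cast hq
  have e1 := congrArg (ptrSnd p q) h
  have e2 := congrArg (ptrFst p q) h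
  rw [← smul_kronecker] at e1
  rw [← kronecker_smul] at e2
  simp only [map_add, ptrSnd_kronecker, h1, hB, trace_one, Fintype.card_fin, map_zero,
    zero_smul, add_zero] at e1
  simp only [map_add, ptrFst_kronecker, h2, hA, trace_one, Fintype.card_fin, map_zero,
    zero_smul, add_zero] at e2
  have et := congrArg Matrix.trace e1
  have ht : t = 0 := by simpa [hA, hp', hq', hp, hq] using et
  subst ht
  have hA0 : A = 0 := by simpa [hq', hq] using e1
  have hB0 : B = 0 := by simpa [hp', hp] using e2
  subst hA0 hB0
  simpa using h

/-- A skew-Hermitian matrix is a traceless skew-Hermitian matrix plus a real multiple of `i 1`. -/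
lemma exists_traceless_add {n : ℕ} (hn : n ≠ 0) (A : Matrix (Fin n) (Fin n) ℂ) (hA : Aᴴ = -A) :
    ∃ (A₀ : Matrix (Fin n) (Fin n) ℂ) (t : ℝ), A₀ᴴ = -A₀ ∧ A₀.trace = 0 ∧
      A = A₀ + ((t : ℂ) * Complex.I) • 1 := by
  have hn' : (n : ℂ) ≠ 0 := by exact_mod_cast hn
  have htr : A.trace = (A.trace.im : ℂ) * Complex.I := by
    have h := congrArg Matrix.trace hA
    rw [trace_conjTranspose, trace_neg] at h
    have hre := congrArg Complex.re h
    simp at hre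
    apply Complex.ext
    · simp; linarith
    · simp
  refine ⟨A - (((A.trace.im / n : ℝ) : ℂ) * Complex.I) • 1, A.trace.im / n, ?_, ?_, by abel⟩
  · rw [conjTranspose_sub, hA, conjTranspose_smul, conjTranspose_one]
    simp only [star_mul', RCLike.star_def, Complex.conj_ofReal, Complex.conj_I, mul_neg, neg_smul]
    abel
  · rw [trace_sub, trace_smul, trace_one, Fintype.card_fin, smul_eq_mul]
    nth_rewrite 1 [htr]
    push_cast
    field_simp
    ring

lemma I_smul_kronecker_mem (hp : p ≠ 0) (hq : q ≠ 0)
    (A : Matrix (Fin p) (Fin p) ℂ) (B : Matrix (Fin q) (Fin q) ℂ) (hA : Aᴴ = -A) (hB : Bᴴ = -B) :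
    Complex.I • (A ⊗ₖ B) ∈ S1 p q ⊔ S2 p q ⊔ S3 p q ⊔ S4 p q := by
  obtain ⟨A, s, hA', hA0, rfl⟩ := exists_traceless_add hp A hA
  obtain ⟨B, t, hB', hB0, rfl⟩ := exists_traceless_add hq B hB
  have e : Complex.I • ((A + ((s : ℂ) * Complex.I) • 1) ⊗ₖ (B + ((t : ℂ) * Complex.I) • 1)) =
      (((-(s * t) : ℝ) : ℂ) * Complex.I) •
        ((1 : Matrix (Fin p) (Fin p) ℂ) ⊗ₖ (1 : Matrix (Fin q) (Fin q) ℂ))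
      + (-t) • (A ⊗ₖ (1 : Matrix (Fin q) (Fin q) ℂ))
      + (-s) • ((1 : Matrix (Fin p) (Fin p) ℂ) ⊗ₖ B) + Complex.I • (A ⊗ₖ B) := by
    ext ⟨i, j⟩ ⟨i', j'⟩
    simp only [Matrix.smul_apply, Matrix.add_apply, kroneckerMap_apply, smul_eq_mul,
      Complex.real_smul]
    push_cast
    linear_combination ((t : ℂ) * A i i' * (1 : Matrix (Fin q) (Fin q) ℂ) j j'
      + s * (1 : Matrix (Fin p) (Fin p) ℂ) i i' * B j j'
      + s * t * Complex.I * (1 : Matrix (Fin p) (Fin p) ℂ) i i' *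
        (1 : Matrix (Fin q) (Fin q) ℂ) j j') * Complex.I_sq
  rw [e]
  refine Submodule.add_mem_sup (Submodule.add_mem_sup (Submodule.add_mem_sup ?_ ?_) ?_) ?_
  · exact (mem_S1_iff p q _).2 ⟨_, rfl⟩
  · exact Submodule.smul_mem _ _ (Submodule.subset_span ⟨A, hA', hA0, rfl⟩)
  · exact Submodule.smul_mem _ _ (Submodule.subset_span ⟨B, hB', hB0, rfl⟩)
  · exact Submodule.subset_span ⟨A, B, hA', hA0, hB', hB0, rfl⟩

lemma exists_skew_parts {n : ℕ} (A : Matrix (Fin n) (Fin n) ℂ) :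
    ∃ A₁ A₂ : Matrix (Fin n) (Fin n) ℂ, A₁ᴴ = -A₁ ∧ A₂ᴴ = -A₂ ∧ A = A₁ + Complex.I • A₂ := by
  refine ⟨(1 / 2 : ℂ) • (A - Aᴴ), (-(Complex.I / 2)) • (A + Aᴴ), ?_, ?_, ?_⟩
  · ext i j
    simp
    ring
  · ext i j
    simp
    ring
  · ext i j
    simp only [Matrix.smul_apply, Matrix.add_apply, Matrix.sub_apply, smul_eq_mul]
    linear_combination (A i j + Aᴴ i j) / 2 * Complex.I_sq

lemma kronecker_sub_conjTranspose_mem (hp : p ≠ 0) (hq : q ≠ 0)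
    (A : Matrix (Fin p) (Fin p) ℂ) (B : Matrix (Fin q) (Fin q) ℂ) :
    A ⊗ₖ B - (A ⊗ₖ B)ᴴ ∈ S1 p q ⊔ S2 p q ⊔ S3 p q ⊔ S4 p q := by
  obtain ⟨A₁, A₂, h1, h2, rfl⟩ := exists_skew_parts A
  obtain ⟨B₁, B₂, h3, h4, rfl⟩ := exists_skew_parts B
  have e : (A₁ + Complex.I • A₂) ⊗ₖ (B₁ + Complex.I • B₂)
      - ((A₁ + Complex.I • A₂) ⊗ₖ (B₁ + Complex.I • B₂))ᴴ =
      (2 : ℝ) • (Complex.I • (A₁ ⊗ₖ B₂) + Complex.I • (A₂ ⊗ₖ B₁)) := by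
    rw [conjTranspose_kronecker, conjTranspose_add, conjTranspose_add, conjTranspose_smul,
      conjTranspose_smul, h1, h2, h3, h4]
    ext ⟨i, j⟩ ⟨i', j'⟩
    simp only [Matrix.smul_apply, Matrix.add_apply, Matrix.sub_apply, Matrix.neg_apply,
      kroneckerMap_apply, smul_eq_mul, Complex.real_smul, RCLike.star_def, Complex.conj_I]
    push_cast
    ring
  rw [e]
  exact Submodule.smul_mem _ _ (Submodule.add_mem _
    (I_smul_kronecker_mem p q hp hq _ _ h1 h4) (I_smul_kronecker_mem p q hp hq _ _ h2 h3))

lemma sub_conjTranspose_mem (hp : p ≠ 0) (hq : q ≠ 0)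
    (X : Matrix (Fin p × Fin q) (Fin p × Fin q) ℂ) :
    X - Xᴴ ∈ S1 p q ⊔ S2 p q ⊔ S3 p q ⊔ S4 p q := by
  induction X using Matrix.induction_on' with
  | h_zero => simp
  | h_add X Y hX hY =>
    have e : X + Y - (X + Y)ᴴ = (X - Xᴴ) + (Y - Yᴴ) := by
      rw [conjTranspose_add]; abel
    rw [e]
    exact Submodule.add_mem _ hX hY
  | h_std_basis i j x =>
    have e : Matrix.single i j x = Matrix.single i.1 j.1 x ⊗ₖ Matrix.single i.2 j.2 (1 : ℂ) := by
      rw [single_kronecker_single, mul_one]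
    rw [e]
    exact kronecker_sub_conjTranspose_mem p q hp hq _ _

lemma mem_sup_of_skew (hp : p ≠ 0) (hq : q ≠ 0)
    (X : Matrix (Fin p × Fin q) (Fin p × Fin q) ℂ) (hX : Xᴴ = -X) :
    X ∈ S1 p q ⊔ S2 p q ⊔ S3 p q ⊔ S4 p q := by
  have e : X = (1 / 2 : ℝ) • (X - Xᴴ) := by
    rw [hX, sub_neg_eq_add, ← two_smul ℝ X, smul_smul]
    norm_num
  rw [e]
  exact Submodule.smul_mem _ _ (sub_conjTranspose_mem p q hp hq X)

/-- **Lemma 3.14 (decomposition).** For `p, q ≥ 2`, every skew-Hermitian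
`(pq) × (pq)` matrix is uniquely the sum of an element of `ℝ·(i·I_{pq})`, an element of
`su(p) ⊗ₖ I_q`, an element of `I_p ⊗ₖ su(q)`, and an element of
`span_ℝ{i·(A ⊗ₖ B) : A ∈ su(p), B ∈ su(q)}`; i.e. `u(pq)` is the internal direct sum
of these four subspaces. -/
theorem skewHerm_direct_sum_decomposition (hp : 2 ≤ p) (hq : 2 ≤ q) :
    ∀ X : Matrix (Fin p × Fin q) (Fin p × Fin q) ℂ, Xᴴ = -X →
      ∃! y : S1 p q × S2 p q × S3 p q × S4 p q,
        (y.1 : Matrix (Fin p × Fin q) (Fin p × Fin q) ℂ) + y.2.1 + y.2.2.1 + y.2.2.2 = X := by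
  intro X hX
  have hp0 : p ≠ 0 := by omega
  have hq0 : q ≠ 0 := by omega
  obtain ⟨_, h, d, hd, rfl⟩ := Submodule.mem_sup.1 (mem_sup_of_skew p q hp0 hq0 X hX)
  obtain ⟨_, h₁, c, hc, rfl⟩ := Submodule.mem_sup.1 h
  obtain ⟨a, ha, b, hb, rfl⟩ := Submodule.mem_sup.1 h₁
  refine ⟨(⟨a, ha⟩, ⟨b, hb⟩, ⟨c, hc⟩, ⟨d, hd⟩), rfl, ?_⟩
  rintro ⟨⟨a', ha'⟩, ⟨b', hb'⟩, ⟨c', hc'⟩, ⟨d', hd'⟩⟩ h'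
  have hsum : (a' - a) + (b' - b) + (c' - c) + (d' - d) = 0 := by
    have h'' : a' + b' + c' + d' = a + b + c + d := h'
    rw [← sub_eq_zero] at h''
    rw [← h'']
    abel
  obtain ⟨h1, h2, h3, h4⟩ := eq_zero_of_sum_eq_zero_s11 p q hp0 hq0 (Submodule.sub_mem _ ha' ha)
    (Submodule.sub_mem _ hb' hb) (Submodule.sub_mem _ hc' hc) (Submodule.sub_mem _ hd' hd) hsum
  rw [sub_eq_zero] at h1 h2 h3 h4
  subst h1 h2 h3 h4
  rfl
end
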